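/- The equation 𝖫(u;k) = 0 on ℝ³ with k a real constant admits a locally Lipschitz weak solution if and only if k = 0. -/

import Mathlib

noncomputable section

abbrev R3 := ℝ × ℝ × ℝ

def e1 : R3 := (1, 0, 0)
def e2 : R3 := (0, 1, 0)
def e3 : R3 := (0, 0, 1)

def pd (v : R3 → ℝ) (w : R3) (p : R3) : ℝ := fderiv ℝ v p w

def pd2 (v : R3 → ℝ) (w w' : R3) (p : R3) : ℝ := fderiv ℝ (fun q => fderiv ℝ v q w') p w

def GraphLevi (v : R3 → ℝ) (p : R3) : ℝ :=
  (1 + pd v e3 p ^ 2) * (pd2 v e1 e1 p + pd2 v e2 e2 p)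
    + (pd v e1 p ^ 2 + pd v e2 p ^ 2) * pd2 v e3 e3 p
    + 2 * (pd v e2 p - pd v e1 p * pd v e3 p) * pd2 v e1 e3 p
    - 2 * (pd v e1 p + pd v e2 p * pd v e3 p) * pd2 v e2 e3 p

/-- The complete Levi operator 𝖫(v;k) for graphs. -/
def GraphLeviK (v : R3 → ℝ) (k : R3 → ℝ) (p : R3) : ℝ :=
  GraphLevi v p
    + k p * (1 + pd v e1 p ^ 2 + pd v e2 p ^ 2 + pd v e3 p ^ 2) ^ ((3 : ℝ) / 2)

/-- Weak (viscosity) solution of 𝖫(u;k) = 0 on `U`. -/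
def IsWeakGraphLeviSolution (k : R3 → ℝ) (u : R3 → ℝ) (U : Set R3) : Prop :=
  (∀ y ∈ U, ∀ φ : R3 → ℝ, ContDiff ℝ (⊤ : ℕ∞) φ →
    IsLocalMax (fun x => u x - φ x) y → 0 ≤ GraphLeviK φ k y) ∧
  (∀ y ∈ U, ∀ φ : R3 → ℝ, ContDiff ℝ (⊤ : ℕ∞) φ →
    IsLocalMin (fun x => u x - φ x) y → GraphLeviK φ k y ≤ 0)

/-- locally Lipschitz on a set. -/
def LocLipschitzOn (u : R3 → ℝ) (U : Set R3) : Prop :=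
  ∀ p ∈ U, ∃ (C : NNReal) (V : Set R3), V ∈ nhds p ∧ LipschitzOnWith C u (V ∩ U)

def sqnorm (p : R3) : ℝ := p.1 ^ 2 + p.2.1 ^ 2 + p.2.2 ^ 2

/-- The Euclidean ball B(R) ⊂ ℝ³. -/
def ballR (R : ℝ) : Set R3 := {p | sqnorm p < R ^ 2}

-- HELPERS
/-- Polynomial test functions. -/
def tst (a b c s0 : ℝ) (x : R3) : ℝ :=
  a + b * (sqnorm x - s0) + c * (sqnorm x - s0) ^ 2

/-- The differential of a polynomial test function. -/
def tst' (b c s0 : ℝ) (x w : R3) : ℝ :=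
  (b + 2 * c * (sqnorm x - s0)) * (2 * (x.1 * w.1 + x.2.1 * w.2.1 + x.2.2 * w.2.2))

theorem sqnorm_contDiff : ContDiff ℝ (⊤ : ℕ∞) sqnorm := by
  unfold sqnorm; fun_prop

theorem tst_contDiff (a b c s0 : ℝ) : ContDiff ℝ (⊤ : ℕ∞) (tst a b c s0) := by
  have := sqnorm_contDiff
  unfold tst; fun_prop

theorem line_deriv {f : R3 → ℝ} {x w : R3} {d : ℝ} (hf : DifferentiableAt ℝ f x)
    (h : HasDerivAt (fun r : ℝ => f (x + r • w)) d 0) : fderiv ℝ f x w = d := by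
  have h2 : HasDerivAt (fun r : ℝ => x + r • w) w 0 := by
    simpa using ((hasDerivAt_id (0:ℝ)).smul_const w).const_add x
  have h1 : HasFDerivAt f (fderiv ℝ f x) (x + (0:ℝ) • w) := by simpa using hf.hasFDerivAt
  exact (h1.comp_hasDerivAt (0:ℝ) h2).unique h

theorem sqnorm_line (x w : R3) :
    HasDerivAt (fun r : ℝ => sqnorm (x + r • w))
      (2 * (x.1 * w.1 + x.2.1 * w.2.1 + x.2.2 * w.2.2)) 0 := by
  have h : ∀ p q : ℝ, HasDerivAt (fun r : ℝ => (p + r * q) ^ 2) (2 * (p * q)) 0 := by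
    intro p q
    have h2 : HasDerivAt (fun r : ℝ => p + r * q) q 0 := by
      simpa using ((hasDerivAt_id (0:ℝ)).mul_const q).const_add p
    refine HasDerivAt.congr_deriv (h2.pow 2) ?_
    simp; ring
  unfold sqnorm
  refine HasDerivAt.congr_deriv (((h x.1 w.1).add (h x.2.1 w.2.1)).add (h x.2.2 w.2.2)) ?_
  ring

theorem fderiv_tst (a b c s0 : ℝ) (x w : R3) :
    fderiv ℝ (tst a b c s0) x w = tst' b c s0 x w := by
  apply line_deriv ((tst_contDiff a b c s0).differentiable (by simp) x)
  have h := (sqnorm_line x w).sub_const s0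
  unfold tst tst'
  refine HasDerivAt.congr_deriv (((h.const_mul b).const_add a).add ((h.pow 2).const_mul c)) ?_
  simp; ring

theorem fderiv_tst' (b c s0 : ℝ) (y w w' : R3) (hy : sqnorm y = s0) :
    fderiv ℝ (fun q => tst' b c s0 q w') y w =
      2 * b * (w.1 * w'.1 + w.2.1 * w'.2.1 + w.2.2 * w'.2.2)
      + 8 * c * (y.1 * w.1 + y.2.1 * w.2.1 + y.2.2 * w.2.2)
        * (y.1 * w'.1 + y.2.1 * w'.2.1 + y.2.2 * w'.2.2) := by
  have hd : ContDiff ℝ (⊤ : ℕ∞) (fun q => tst' b c s0 q w') := by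
    have := sqnorm_contDiff
    unfold tst'; fun_prop
  apply line_deriv (hd.differentiable (by simp) y)
  have h := (sqnorm_line y w).sub_const s0
  have hl : ∀ p q : ℝ, HasDerivAt (fun r : ℝ => p + r * q) q 0 := by
    intro p q
    simpa using ((hasDerivAt_id (0:ℝ)).mul_const q).const_add p
  have h2 := ((((hl y.1 w.1).mul_const w'.1).add ((hl y.2.1 w.2.1).mul_const w'.2.1)).add
    ((hl y.2.2 w.2.2).mul_const w'.2.2)).const_mul 2
  unfold tst'
  refine HasDerivAt.congr_deriv (((h.const_mul (2 * c)).const_add b).mul h2) ?_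
  simp [hy]; ring

theorem pd_tst (a b c s0 : ℝ) (x w : R3) : pd (tst a b c s0) w x = tst' b c s0 x w :=
  fderiv_tst a b c s0 x w

theorem pd2_tst (a b c s0 : ℝ) (y w w' : R3) (hy : sqnorm y = s0) :
    pd2 (tst a b c s0) w w' y =
      2 * b * (w.1 * w'.1 + w.2.1 * w'.2.1 + w.2.2 * w'.2.2)
      + 8 * c * (y.1 * w.1 + y.2.1 * w.2.1 + y.2.2 * w.2.2)
        * (y.1 * w'.1 + y.2.1 * w'.2.1 + y.2.2 * w'.2.2) := by
  unfold pd2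
  simp only [fderiv_tst]
  exact fderiv_tst' b c s0 y w w' hy

theorem levi_tst (a b c s0 k : ℝ) (y : R3) (hy : sqnorm y = s0) :
    GraphLeviK (tst a b c s0) (fun _ => k) y =
      2 * b * (2 * (1 + 4 * b ^ 2 * y.2.2 ^ 2) + 4 * b ^ 2 * (y.1 ^ 2 + y.2.1 ^ 2))
      + 8 * c * (y.1 ^ 2 + y.2.1 ^ 2)
      + k * (1 + 4 * b ^ 2 * s0) ^ ((3 : ℝ) / 2) := by
  unfold GraphLeviK GraphLevi
  simp only [pd_tst, pd2_tst _ _ _ _ _ _ _ hy]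
  congr 1
  · simp [tst', e1, e2, e3, hy]; ring
  · congr 2
    simp only [tst', e1, e2, e3, hy]
    rw [← hy, sqnorm]; ring

theorem key_ineq (k T b t s : ℝ) (hk : 0 < k) (hT : T = 65536 / k ^ 2) (hb : b = k * T ^ 2 / 512)
    (ht : 0 < t) (hs : 0 ≤ s) (hst : s + t = T) :
    4 * (b / t ^ 2) * (1 + 4 * (b / t ^ 2) ^ 2 * s) + 8 * (2 * b / t ^ 3) * s <
      k * (1 + 4 * (b / t ^ 2) ^ 2 * s) ^ ((3 : ℝ) / 2) := by
  have hTp : 0 < T := by rw [hT]; positivity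
  have hbp : 0 < b := by rw [hb]; positivity
  have hkT : k ^ 2 * T = 65536 := by rw [hT]; field_simp
  have hb2 : b ^ 2 = T ^ 3 / 4 := by
    rw [hb]
    linear_combination T ^ 3 / 262144 * hkT
  set β := b / t ^ 2 with hβ
  have hβp : 0 < β := by positivity
  set X := 1 + 4 * β ^ 2 * s with hX
  have hX1 : 1 ≤ X := by rw [hX]; nlinarith [mul_nonneg (sq_nonneg β) hs]
  set Q := Real.sqrt X with hQ
  have hQ2 : Q ^ 2 = X := Real.sq_sqrt (by linarith)
  have hQ1 : 1 ≤ Q := by rw [hQ]; exact Real.one_le_sqrt.mpr hX1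
  have hpow : X ^ ((3 : ℝ) / 2) = Q ^ 3 := by
    rw [hQ, Real.sqrt_eq_rpow, ← Real.rpow_natCast, ← Real.rpow_mul (by linarith)]
    norm_num
  rw [hpow]
  -- two halves
  suffices h : 8 * β ≤ k * Q ∧ 32 * b * s / t ^ 3 < k * Q ^ 3 by
    obtain ⟨h1, h2⟩ := h
    have h3 : 8 * β * X ≤ k * Q ^ 3 := by
      calc 8 * β * X = 8 * β * Q ^ 2 := by rw [hQ2]
        _ ≤ k * Q * Q ^ 2 := by gcongr
        _ = k * Q ^ 3 := by ring
    have h4 : 8 * (2 * b / t ^ 3) * s = (32 * b * s / t ^ 3) / 2 := by ring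
    rw [h4]; linarith
  rcases le_or_gt (T / 2) t with h | h
  · have hkQ : k ≤ k * Q := by nlinarith
    have hkQ3 : k ≤ k * Q ^ 3 := by
      have := one_le_pow₀ (n := 3) hQ1
      nlinarith
    constructor
    · refine le_trans ?_ hkQ
      rw [hβ, ← mul_div_assoc, div_le_iff₀ (by positivity), hb]
      have : (T / 2) ^ 2 ≤ t ^ 2 := by gcongr
      nlinarith
    · refine lt_of_lt_of_le ?_ hkQ3
      rw [div_lt_iff₀ (by positivity)]
      have h3 : (T / 2) ^ 3 ≤ t ^ 3 := by gcongr
      have h4 : s ≤ T := by linarith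
      calc 32 * b * s ≤ 32 * b * T := by gcongr
        _ = k * (T ^ 3 / 16) := by rw [hb]; ring
        _ < k * (T / 2) ^ 3 := by
          have : 0 < k * T ^ 3 := by positivity
          nlinarith
        _ ≤ k * t ^ 3 := by gcongr
  · have hs2 : T / 2 < s := by linarith
    have hsp : 0 < s := by linarith
    have hQb : 256 * β ≤ k * Q := by
      apply abs_le_of_sq_le_sq' _ (by positivity) |>.2
      have h9 : 4 * β ^ 2 * (T / 2) ≤ X := by
        rw [hX]; nlinarith [mul_pos (pow_pos hβp 2) (sub_pos.2 hs2)]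
      calc (256 * β) ^ 2 ≤ k ^ 2 * T * (2 * β ^ 2) := by rw [hkT]; nlinarith [sq_nonneg β]
        _ = k ^ 2 * (4 * β ^ 2 * (T / 2)) := by ring
        _ ≤ k ^ 2 * X := by gcongr
        _ = (k * Q) ^ 2 := by rw [← hQ2]; ring
    have hX4 : 4 * β ^ 2 * s ≤ X := by rw [hX]; linarith
    constructor
    · linarith
    · have h5 : 1024 * β ^ 3 * s ≤ k * Q ^ 3 := by
        calc 1024 * β ^ 3 * s = 256 * β * (4 * β ^ 2 * s) := by ring
          _ ≤ k * Q * X := by gcongr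
          _ = k * Q ^ 3 := by rw [← hQ2]; ring
      refine lt_of_lt_of_le ?_ h5
      rw [hβ, div_pow, mul_div_assoc', div_mul_eq_mul_div, div_lt_div_iff₀ (by positivity) (by positivity)]
      have h6 : t ^ 3 < T ^ 3 := by gcongr; linarith
      have h7 : t ^ 3 < 32 * b ^ 2 := by rw [hb2]; nlinarith [pow_pos hTp 3]
      have h8 : 0 < 32 * b * s * t ^ 3 := by positivity
      nlinarith [mul_lt_mul_of_pos_left h7 h8]

theorem compact_sq (c : ℝ) : IsCompact {x : R3 | sqnorm x ≤ c} := by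
  apply Metric.isCompact_of_isClosed_isBounded
  · exact isClosed_le sqnorm_contDiff.continuous continuous_const
  · refine (Metric.isBounded_closedBall (x := (0 : R3)) (r := 1 + c)).subset ?_
    intro x hx
    simp only [Set.mem_ofPred_eq, sqnorm] at hx
    have h : ∀ z : ℝ, z ^ 2 ≤ c → |z| ≤ 1 + c := by
      intro z hz; rw [abs_le]; constructor <;> nlinarith [sq_nonneg (z - 1), sq_nonneg (z + 1)]
    simp only [Metric.mem_closedBall, dist_zero_right, Prod.norm_def, Real.norm_eq_abs, sup_le_iff]
    refine ⟨h _ ?_, h _ ?_, h _ ?_⟩ <;>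
      nlinarith [sq_nonneg x.1, sq_nonneg x.2.1, sq_nonneg x.2.2]

theorem exists_touch (u : R3 → ℝ) (hu : Continuous u) (T b : ℝ) (hT : 0 < T) (hb : 0 < b) :
    ∃ (y : R3) (t a : ℝ), 0 < t ∧ sqnorm y + t = T ∧
      IsLocalMin (fun x => u x - tst a (-(b / t ^ 2)) (-(2 * b / t ^ 3)) (sqnorm y) x) y := by
  have hn : ∀ x, 0 ≤ sqnorm x := fun x => by unfold sqnorm; positivity
  have h0 : sqnorm (0 : R3) = 0 := by simp [sqnorm]
  obtain ⟨z, hz, hm⟩ := (compact_sq T).exists_isMinOn ⟨0, by simp [h0, hT.le]⟩ hu.continuousOn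
  set M := u 0 + b / T - u z + 1 with hM
  have hMz : u z ≤ u 0 := hm (by simp [h0, hT.le])
  have hMp : b / T < M := by linarith
  have hMp0 : 0 < M := lt_trans (by positivity) hMp
  set δ := b / M with hδ
  have hδp : 0 < δ := by positivity
  have hδT : δ < T := by
    rw [hδ, div_lt_iff₀ hMp0]; rwa [div_lt_iff₀ hT, mul_comm] at hMp
  have hcs := sqnorm_contDiff.continuous
  have hcont : ContinuousOn (fun x => u x + b / (T - sqnorm x)) {x | sqnorm x ≤ T - δ} := by
    apply hu.continuousOn.add
    apply continuousOn_const.div (by fun_prop)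
    intro x hx
    simp only [Set.mem_ofPred_eq] at hx
    linarith
  have h0m : (0 : R3) ∈ {x | sqnorm x ≤ T - δ} := by simp [h0, hδT.le]
  obtain ⟨y, hy, hmin⟩ := (compact_sq (T - δ)).exists_isMinOn ⟨0, h0m⟩ hcont
  simp only [Set.mem_ofPred_eq] at hy
  have hylt : sqnorm y < T - δ := by
    refine lt_of_le_of_ne hy fun he => ?_
    have h1 : u y + b / (T - sqnorm y) ≤ u 0 + b / (T - sqnorm 0) := hmin h0m
    have h2 : u z ≤ u y := hm (by simp only [Set.mem_ofPred_eq]; linarith)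
    have h3 : b / (T - sqnorm y) = M := by
      rw [he, sub_sub_cancel, hδ, div_div_cancel₀ hb.ne']
    rw [h3, h0, sub_zero] at h1
    linarith
  set t := T - sqnorm y with ht
  have htp : 0 < t := by linarith
  refine ⟨y, t, -(b / t), htp, by linarith, ?_⟩
  have ev1 : ∀ᶠ x in nhds y, sqnorm x < T - δ := hcs.continuousAt.eventually (gt_mem_nhds hylt)
  have ev2 : ∀ᶠ x in nhds y, sqnorm x < sqnorm y + t / 2 :=
    hcs.continuousAt.eventually (gt_mem_nhds (by linarith))
  filter_upwards [ev1, ev2] with x h1 h2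
  have h3 : u y + b / t ≤ u x + b / (T - sqnorm x) := hmin (show x ∈ {x | sqnorm x ≤ T - δ} from h1.le)
  set r := sqnorm x - sqnorm y with hr
  have h4 : T - sqnorm x = t - r := by rw [hr, ht]; ring
  rw [h4] at h3
  have h5 : 0 < t - r := by linarith
  have h6 : b / (t - r) ≤ b / t + b / t ^ 2 * r + 2 * b / t ^ 3 * r ^ 2 := by
    have : b / t + b / t ^ 2 * r + 2 * b / t ^ 3 * r ^ 2 - b / (t - r)
        = b * r ^ 2 * (t - 2 * r) / (t ^ 3 * (t - r)) := by
      field_simp; ring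
    have h7 : 0 ≤ b * r ^ 2 * (t - 2 * r) / (t ^ 3 * (t - r)) := by
      have : 0 ≤ t - 2 * r := by linarith
      positivity
    linarith
  simp only [tst, sub_self, ← hr]
  linarith

theorem levi_pos (k : ℝ) (hk : 0 < k) (u : R3 → ℝ) (hu : Continuous u) :
    ∃ (y : R3) (a β γ : ℝ),
      IsLocalMin (fun x => u x - tst a (-β) (-γ) (sqnorm y) x) y ∧
      2 * β * (2 * (1 + 4 * β ^ 2 * y.2.2 ^ 2) + 4 * β ^ 2 * (y.1 ^ 2 + y.2.1 ^ 2))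
      + 8 * γ * (y.1 ^ 2 + y.2.1 ^ 2)
      < k * (1 + 4 * β ^ 2 * sqnorm y) ^ ((3 : ℝ) / 2) := by
  have hTp : 0 < 65536 / k ^ 2 := by positivity
  have hbp : 0 < k * (65536 / k ^ 2) ^ 2 / 512 := by positivity
  generalize hT : 65536 / k ^ 2 = T at *
  generalize hb : k * T ^ 2 / 512 = b at *
  obtain ⟨y, t, a, ht, hst, hmin⟩ := exists_touch u hu T b hTp hbp
  refine ⟨y, a, _, _, hmin, ?_⟩
  have hs : 0 ≤ sqnorm y := by unfold sqnorm; positivity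
  refine lt_of_le_of_lt ?_ (key_ineq k T b t (sqnorm y) hk hT.symm hb.symm ht hs hst)
  have hβ : 0 < b / t ^ 2 := by positivity
  have hγ : 0 < 2 * b / t ^ 3 := by positivity
  generalize b / t ^ 2 = β at *
  generalize 2 * b / t ^ 3 = γ at *
  unfold sqnorm
  have h1 : 0 ≤ β ^ 3 * (y.1 ^ 2 + y.2.1 ^ 2) := by positivity
  have h2 : 0 ≤ γ * y.2.2 ^ 2 := by positivity
  nlinarith

theorem second_deriv_nonneg (f : ℝ → ℝ) (x : ℝ) (hf : ContDiff ℝ 2 f) (h : IsLocalMin f x) :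
    0 ≤ deriv (deriv f) x := by
  by_contra! hneg
  have hmax := isLocalMax_of_deriv_deriv_neg hneg h.deriv_eq_zero hf.continuous.continuousAt
  have hc : f =ᶠ[nhds x] fun _ => f x := by
    filter_upwards [h, hmax] with z h1 h2 using le_antisymm h2 h1
  have := hc.deriv.deriv_eq
  simp at this
  linarith

theorem pd2_nonneg (φ : R3 → ℝ) (hφ : ContDiff ℝ (⊤ : ℕ∞) φ) (y w : R3) (h : IsLocalMin φ y) :
    0 ≤ pd2 φ w w y := by
  have hl : ∀ r : ℝ, HasDerivAt (fun r : ℝ => y + r • w) w r := fun r => by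
    simpa using ((hasDerivAt_id r).smul_const w).const_add y
  have hd : deriv (fun r : ℝ => φ (y + r • w)) = fun r => fderiv ℝ φ (y + r • w) w := by
    funext r
    exact (((hφ.differentiable (by simp) _).hasFDerivAt).comp_hasDerivAt r (hl r)).deriv
  have hφ' : ContDiff ℝ 1 (fun q => fderiv ℝ φ q w) := by
    have := hφ.fderiv_right (m := 1) (by norm_cast)
    fun_prop
  have hdd : deriv (deriv (fun r : ℝ => φ (y + r • w))) 0 = pd2 φ w w y := by
    rw [hd]
    have := ((hφ'.differentiable (by simp) (y + (0:ℝ) • w)).hasFDerivAt).comp_hasDerivAt (0:ℝ) (hl 0)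
    have h2 := this.deriv
    simp only [zero_smul, add_zero] at h2
    exact h2
  rw [← hdd]
  apply second_deriv_nonneg
  · have : ContDiff ℝ 2 φ := hφ.of_le (by norm_cast)
    fun_prop
  · have hc : ContinuousAt (fun r : ℝ => y + r • w) 0 := (hl 0).continuousAt
    have hc' : Filter.Tendsto (fun r : ℝ => y + r • w) (nhds 0) (nhds y) := by
      simpa [ContinuousAt] using hc
    have := hc'.eventually h
    filter_upwards [this] with r hr
    simpa using hr

theorem levi_crit (φ : R3 → ℝ) (y : R3) (h : fderiv ℝ φ y = 0) :
    GraphLeviK φ (fun _ => 0) y = pd2 φ e1 e1 y + pd2 φ e2 e2 y := by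
  simp [GraphLeviK, GraphLevi, pd, h]

theorem pd2_neg (φ : R3 → ℝ) (y w : R3) : pd2 (fun x => - φ x) w w y = - pd2 φ w w y := by
  unfold pd2
  have : (fun q => fderiv ℝ (fun x => - φ x) q w) = fun q => - fderiv ℝ φ q w := by
    funext q; rw [fderiv_fun_neg]; rfl
  rw [this, fderiv_fun_neg]; rfl

/-- the equation 𝖫(u;k) = 0 on ℝ³ with constant `k` admits a locally
Lipschitz weak solution if and only if `k = 0`. -/
theorem constant_levi_curvature_solution_iff (k : ℝ) :
    (∃ u : R3 → ℝ, LocLipschitzOn u Set.univ ∧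
      IsWeakGraphLeviSolution (fun _ => k) u Set.univ) ↔ k = 0 := by
  constructor
  · rintro ⟨u, hL, hmax, hmin⟩
    have hu : Continuous u := by
      rw [continuous_iff_continuousAt]
      intro p
      obtain ⟨C, V, hV, hC⟩ := hL p trivial
      rw [Set.inter_univ] at hC
      exact hC.continuousOn.continuousAt hV
    rcases lt_trichotomy k 0 with hk | hk | hk
    · exfalso
      obtain ⟨y, a, β, γ, h1, h2⟩ := levi_pos (-k) (by linarith) (fun x => - u x) hu.neg
      have h3 : IsLocalMax (fun x => u x - tst (-a) β γ (sqnorm y) x) y := by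
        filter_upwards [h1] with x hx
        simp only [tst] at hx ⊢
        linarith
      have h4 := hmax y trivial _ (tst_contDiff _ _ _ _) h3
      rw [levi_tst _ _ _ _ _ _ rfl] at h4
      linarith
    · exact hk
    · exfalso
      obtain ⟨y, a, β, γ, h1, h2⟩ := levi_pos k hk u hu
      have h4 := hmin y trivial _ (tst_contDiff _ _ _ _) h1
      rw [levi_tst _ _ _ _ _ _ rfl, neg_sq] at h4
      linarith
  · rintro rfl
    refine ⟨fun _ => 0, ?_, ?_, ?_⟩
    · intro p _
      exact ⟨0, Set.univ, Filter.univ_mem, (LipschitzWith.const (0:ℝ)).lipschitzOnWith⟩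
    · intro y _ φ hφ h
      have h1 : IsLocalMin φ y := by
        filter_upwards [h] with x hx
        linarith
      rw [levi_crit φ y h1.fderiv_eq_zero]
      exact add_nonneg (pd2_nonneg φ hφ y _ h1) (pd2_nonneg φ hφ y _ h1)
    · intro y _ φ hφ h
      have h1 : IsLocalMax φ y := by
        filter_upwards [h] with x hx
        linarith
      have h2 : IsLocalMin (fun x => - φ x) y := h1.neg
      rw [levi_crit φ y h1.fderiv_eq_zero]
      have h3 := pd2_nonneg _ hφ.neg y e1 h2
      have h4 := pd2_nonneg _ hφ.neg y e2 h2
      rw [pd2_neg] at h3 h4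
      linarith

end
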